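/- Let f¹, f² : ℝ⁵ → ℝ be smooth functions of (t, x, y, ζ₁, ζ₂), let σ : ℝ → ℝ be smooth, and let ψ : ℝ³ → ℝ be a smooth solution of ζ_t + ψ_x ζ_y − ψ_y ζ_x = ∂_x[f¹(t,x,y,ζ_x,ζ_y)] + ∂_y[f²(t,x,y,ζ_x,ζ_y)], where ζ := ψ_xx + ψ_yy and ∂_x, ∂_y differentiate the full composition. Then ψ̃(t,x,y) := ψ(t,x,y) + (σ(t)/2)(x² + y²) is a smooth solution of the equation from the same class with arbitrary elements f̃¹(t,x,y,ζ₁,ζ₂) := f¹(t,x,y,ζ₁,ζ₂) + (σ(t)/2)(x²+y²)·ζ₂ + σ'(t)·x and f̃²(t,x,y,ζ₁,ζ₂) := f²(t,x,y,ζ₁,ζ₂) − (σ(t)/2)(x²+y²)·ζ₁ + σ'(t)·y. -/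

import Mathlib

noncomputable section

abbrev V5 := ℝ × ℝ × ℝ × ℝ × ℝ

/-- Partial derivative with respect to t. -/
def dT (f : ℝ × ℝ × ℝ → ℝ) (p : ℝ × ℝ × ℝ) : ℝ := fderiv ℝ f p (1, 0, 0)
/-- Partial derivative with respect to x. -/
def dX (f : ℝ × ℝ × ℝ → ℝ) (p : ℝ × ℝ × ℝ) : ℝ := fderiv ℝ f p (0, 1, 0)
/-- Partial derivative with respect to y. -/
def dY (f : ℝ × ℝ × ℝ → ℝ) (p : ℝ × ℝ × ℝ) : ℝ := fderiv ℝ f p (0, 0, 1)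

/-- The vorticity ζ := ψ_xx + ψ_yy. -/
def vort (ψ : ℝ × ℝ × ℝ → ℝ) : ℝ × ℝ × ℝ → ℝ := fun p => dX (dX ψ) p + dY (dY ψ) p

/-- The full composition (t,x,y) ↦ f(t, x, y, ζ_x(t,x,y), ζ_y(t,x,y)). -/
def fcomp (f : V5 → ℝ) (ψ : ℝ × ℝ × ℝ → ℝ) : ℝ × ℝ × ℝ → ℝ :=
  fun p => f (p.1, p.2.1, p.2.2, dX (vort ψ) p, dY (vort ψ) p)

/-- ψ is a smooth solution of the generalized vorticity equation
ζ_t + ψ_x ζ_y − ψ_y ζ_x = ∂_x[f¹(t,x,y,ζ_x,ζ_y)] + ∂_y[f²(t,x,y,ζ_x,ζ_y)]. -/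
def IsGenVortSol (f1 f2 : V5 → ℝ) (ψ : ℝ × ℝ × ℝ → ℝ) : Prop :=
  ContDiff ℝ (⊤ : ℕ∞) ψ ∧ ∀ p : ℝ × ℝ × ℝ,
    dT (vort ψ) p + dX ψ p * dY (vort ψ) p - dY ψ p * dX (vort ψ) p
      = dX (fcomp f1 ψ) p + dY (fcomp f2 ψ) p

/-!
Add to `ψ` a stream function `φ` whose vorticity depends on `t` alone. Then `∇ζ` is unchanged,
so the flux functions are evaluated at the same arguments as before. The advection term gains
`φ_x ζ_y - φ_y ζ_x`, which is the divergence of `(φ ζ_y, -φ ζ_x)` because mixed partials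
commute, and `ζ_t` gains `(Δφ)_t`, which is absorbed by any field `(g¹, g²)` with that
divergence. The operator `R̃(σ)` is the case of a rigid rotation: `φ = σ (x² + y²) / 2`,
`Δφ = 2σ` and `(g¹, g²) = σ' (x, y)`.
-/

lemma fderiv_fderiv_apply_comm {𝕜 E F : Type*} [RCLike 𝕜] [NormedAddCommGroup E]
    [NormedSpace 𝕜 E] [NormedAddCommGroup F] [NormedSpace 𝕜 F] {f : E → F} {x : E}
    (hf : ContDiffAt 𝕜 2 f x) (v w : E) :
    fderiv 𝕜 (fun y => fderiv 𝕜 f y v) x w = fderiv 𝕜 (fun y => fderiv 𝕜 f y w) x v := by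
  have hf' : DifferentiableAt 𝕜 (fderiv 𝕜 f) x :=
    (hf.fderiv_right one_add_one_eq_two.le).differentiableAt one_ne_zero
  have hsymm : IsSymmSndFDerivAt 𝕜 f x := hf.isSymmSndFDerivAt (by simp)
  simpa [fderiv_clm_apply hf' (differentiableAt_const _)] using hsymm.eq w v

section PartialDerivatives

variable {f g : ℝ × ℝ × ℝ → ℝ} {p : ℝ × ℝ × ℝ}

lemma dT_add (hf : DifferentiableAt ℝ f p) (hg : DifferentiableAt ℝ g p) :
    dT (fun q => f q + g q) p = dT f p + dT g p := by
  simp [dT, fderiv_fun_add hf hg]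

lemma dX_add (hf : DifferentiableAt ℝ f p) (hg : DifferentiableAt ℝ g p) :
    dX (fun q => f q + g q) p = dX f p + dX g p := by
  simp [dX, fderiv_fun_add hf hg]

lemma dY_add (hf : DifferentiableAt ℝ f p) (hg : DifferentiableAt ℝ g p) :
    dY (fun q => f q + g q) p = dY f p + dY g p := by
  simp [dY, fderiv_fun_add hf hg]

lemma dY_sub (hf : DifferentiableAt ℝ f p) (hg : DifferentiableAt ℝ g p) :
    dY (fun q => f q - g q) p = dY f p - dY g p := by
  simp [dY, fderiv_fun_sub hf hg]

lemma dX_mul (hf : DifferentiableAt ℝ f p) (hg : DifferentiableAt ℝ g p) :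
    dX (fun q => f q * g q) p = f p * dX g p + g p * dX f p := by
  simp [dX, fderiv_fun_mul hf hg]

lemma dY_mul (hf : DifferentiableAt ℝ f p) (hg : DifferentiableAt ℝ g p) :
    dY (fun q => f q * g q) p = f p * dY g p + g p * dY f p := by
  simp [dY, fderiv_fun_mul hf hg]

lemma dT_eq_deriv (hf : DifferentiableAt ℝ f p) :
    dT f p = deriv (fun t => f (t, p.2.1, p.2.2)) p.1 := by
  have hline : HasDerivAt (fun t : ℝ => (t, p.2.1, p.2.2)) (1, 0, 0) p.1 :=
    (hasDerivAt_id _).prodMk ((hasDerivAt_const _ _).prodMk (hasDerivAt_const _ _))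
  exact (hf.hasFDerivAt.comp_hasDerivAt p.1 hline).deriv.symm

lemma dX_eq_deriv (hf : DifferentiableAt ℝ f p) :
    dX f p = deriv (fun x => f (p.1, x, p.2.2)) p.2.1 := by
  have hline : HasDerivAt (fun x : ℝ => (p.1, x, p.2.2)) (0, 1, 0) p.2.1 :=
    (hasDerivAt_const _ _).prodMk ((hasDerivAt_id _).prodMk (hasDerivAt_const _ _))
  exact (hf.hasFDerivAt.comp_hasDerivAt p.2.1 hline).deriv.symm

lemma dY_eq_deriv (hf : DifferentiableAt ℝ f p) :
    dY f p = deriv (fun y => f (p.1, p.2.1, y)) p.2.2 := by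
  have hline : HasDerivAt (fun y : ℝ => (p.1, p.2.1, y)) (0, 0, 1) p.2.2 :=
    (hasDerivAt_const _ _).prodMk ((hasDerivAt_const _ _).prodMk (hasDerivAt_id _))
  exact (hf.hasFDerivAt.comp_hasDerivAt p.2.2 hline).deriv.symm

lemma contDiff_dX {m n : WithTop ℕ∞} (hf : ContDiff ℝ n f) (hmn : m + 1 ≤ n) :
    ContDiff ℝ m (dX f) :=
  (hf.fderiv_right hmn).clm_apply contDiff_const

lemma contDiff_dY {m n : WithTop ℕ∞} (hf : ContDiff ℝ n f) (hmn : m + 1 ≤ n) :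
    ContDiff ℝ m (dY f) :=
  (hf.fderiv_right hmn).clm_apply contDiff_const

lemma differentiable_dX (hf : ContDiff ℝ 2 f) : Differentiable ℝ (dX f) :=
  (contDiff_dX hf one_add_one_eq_two.le).differentiable one_ne_zero

lemma differentiable_dY (hf : ContDiff ℝ 2 f) : Differentiable ℝ (dY f) :=
  (contDiff_dY hf one_add_one_eq_two.le).differentiable one_ne_zero

lemma dX_dY_comm (hf : ContDiffAt ℝ 2 f p) : dX (dY f) p = dY (dX f) p :=
  fderiv_fderiv_apply_comm hf _ _

lemma dX_mul_dY_sub_dY_mul_dX (hf : DifferentiableAt ℝ f p) (hg : ContDiff ℝ 2 g) :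
    dX (fun q => f q * dY g q) p - dY (fun q => f q * dX g q) p
      = dX f p * dY g p - dY f p * dX g p := by
  rw [dX_mul hf (differentiable_dY hg p), dY_mul hf (differentiable_dX hg p),
    dX_dY_comm hg.contDiffAt]
  ring

lemma div_flux_add_stream_mul_grad {F1 F2 φ ζ g1 g2 : ℝ × ℝ × ℝ → ℝ}
    (hF1 : DifferentiableAt ℝ F1 p) (hF2 : DifferentiableAt ℝ F2 p)
    (hφ : DifferentiableAt ℝ φ p) (hζ : ContDiff ℝ 2 ζ)
    (hg1 : DifferentiableAt ℝ g1 p) (hg2 : DifferentiableAt ℝ g2 p) :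
    dX (fun q => F1 q + φ q * dY ζ q + g1 q) p + dY (fun q => F2 q - φ q * dX ζ q + g2 q) p
      = dX F1 p + dY F2 p + (dX φ p * dY ζ p - dY φ p * dX ζ p) + (dX g1 p + dY g2 p) := by
  have hφζy := hφ.fun_mul (differentiable_dY hζ p)
  have hφζx := hφ.fun_mul (differentiable_dX hζ p)
  rw [dX_add (hF1.fun_add hφζy) hg1, dX_add hF1 hφζy, dY_add (hF2.fun_sub hφζx) hg2,
    dY_sub hF2 hφζx, ← dX_mul_dY_sub_dY_mul_dX hφ hζ]
  ring

end PartialDerivatives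

section Vorticity

variable {φ ψ : ℝ × ℝ × ℝ → ℝ}

lemma contDiff_vort {m n : WithTop ℕ∞} (hψ : ContDiff ℝ n ψ) (hmn : m + 1 + 1 ≤ n) :
    ContDiff ℝ m (vort ψ) :=
  (contDiff_dX (contDiff_dX hψ hmn) le_rfl).add (contDiff_dY (contDiff_dY hψ hmn) le_rfl)

lemma vort_add (hψ : ContDiff ℝ 2 ψ) (hφ : ContDiff ℝ 2 φ) :
    vort (fun p => ψ p + φ p) = fun p => vort ψ p + vort φ p := by
  have hx : dX (fun p => ψ p + φ p) = fun p => dX ψ p + dX φ p := funext fun p =>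
    dX_add (hψ.differentiable two_ne_zero p) (hφ.differentiable two_ne_zero p)
  have hy : dY (fun p => ψ p + φ p) = fun p => dY ψ p + dY φ p := funext fun p =>
    dY_add (hψ.differentiable two_ne_zero p) (hφ.differentiable two_ne_zero p)
  funext p
  simp only [vort]
  rw [hx, hy, dX_add (differentiable_dX hψ p) (differentiable_dX hφ p),
    dY_add (differentiable_dY hψ p) (differentiable_dY hφ p)]
  ring

lemma fcomp_congr {f : V5 → ℝ} (hx : dX (vort φ) = dX (vort ψ))
    (hy : dY (vort φ) = dY (vort ψ)) : fcomp f φ = fcomp f ψ := by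
  unfold fcomp
  rw [hx, hy]

lemma differentiable_fcomp {f : V5 → ℝ} (hf : Differentiable ℝ f) (hζ : ContDiff ℝ 2 (vort ψ)) :
    Differentiable ℝ (fcomp f ψ) := by
  have hζx := differentiable_dX hζ
  have hζy := differentiable_dY hζ
  unfold fcomp
  fun_prop

end Vorticity

theorem equivalence_transformation_R_sigma_general {f1 f2 : V5 → ℝ} {φ ψ g1 g2 : ℝ × ℝ × ℝ → ℝ}
    (hf1 : Differentiable ℝ f1) (hf2 : Differentiable ℝ f2)
    (hφ : ContDiff ℝ (⊤ : ℕ∞) φ)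
    (hφx : ∀ p, dX (vort φ) p = 0) (hφy : ∀ p, dY (vort φ) p = 0)
    (hg1 : Differentiable ℝ g1) (hg2 : Differentiable ℝ g2)
    (hdiv : ∀ p, dX g1 p + dY g2 p = dT (vort φ) p)
    (h : IsGenVortSol f1 f2 ψ) :
    IsGenVortSol
      (fun q => f1 q + φ (q.1, q.2.1, q.2.2.1) * q.2.2.2.2 + g1 (q.1, q.2.1, q.2.2.1))
      (fun q => f2 q - φ (q.1, q.2.1, q.2.2.1) * q.2.2.2.1 + g2 (q.1, q.2.1, q.2.2.1))
      (fun p => ψ p + φ p) := by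
  obtain ⟨hψ, heq⟩ := h
  refine ⟨hψ.add hφ, fun p => ?_⟩
  have dψ : DifferentiableAt ℝ ψ p := hψ.differentiable (by simp) p
  have dφ : DifferentiableAt ℝ φ p := hφ.differentiable (by simp) p
  have hζ : ContDiff ℝ (⊤ : ℕ∞) (vort ψ) := contDiff_vort hψ (by simp)
  have hζ2 : ContDiff ℝ 2 (vort ψ) := hζ.of_le ENat.LEInfty.out
  have dζ : Differentiable ℝ (vort ψ) := hζ.differentiable (by simp)
  have dω : Differentiable ℝ (vort φ) :=
    (contDiff_vort (m := (⊤ : ℕ∞)) hφ (by simp)).differentiable (by simp)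
  have hadd : vort (fun q => ψ q + φ q) = fun q => vort ψ q + vort φ q :=
    vort_add (hψ.of_le ENat.LEInfty.out) (hφ.of_le ENat.LEInfty.out)
  have hζt : dT (vort fun q => ψ q + φ q) p = dT (vort ψ) p + dT (vort φ) p := by
    rw [hadd, dT_add (dζ p) (dω p)]
  have hζx : dX (vort fun q => ψ q + φ q) = dX (vort ψ) := by
    funext q
    rw [hadd, dX_add (dζ q) (dω q), hφx, add_zero]
  have hζy : dY (vort fun q => ψ q + φ q) = dY (vort ψ) := by
    funext q
    rw [hadd, dY_add (dζ q) (dω q), hφy, add_zero]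
  rw [fcomp_congr hζx hζy, fcomp_congr hζx hζy, hζt, hζx, hζy, dX_add dψ dφ, dY_add dψ dφ]
  refine Eq.trans ?_ (div_flux_add_stream_mul_grad (differentiable_fcomp hf1 hζ2 p)
    (differentiable_fcomp hf2 hζ2 p) dφ hζ2 (hg1 p) (hg2 p)).symm
  linear_combination heq p - hdiv p

section RigidRotation

/-- The stream function of the rigid rotation of the plane about the origin with angular velocity
`σ t`, that is, of the velocity field `(-ψ_y, ψ_x) = σ t • (-y, x)`. -/
def rigidRotation (σ : ℝ → ℝ) : ℝ × ℝ × ℝ → ℝ :=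
  fun p => σ p.1 / 2 * (p.2.1 ^ 2 + p.2.2 ^ 2)

variable {σ : ℝ → ℝ}

lemma contDiff_rigidRotation {n : WithTop ℕ∞} (hσ : ContDiff ℝ n σ) :
    ContDiff ℝ n (rigidRotation σ) := by
  unfold rigidRotation
  fun_prop

lemma dX_time_mul_x (hσ : Differentiable ℝ σ) (p : ℝ × ℝ × ℝ) :
    dX (fun q => σ q.1 * q.2.1) p = σ p.1 := by
  rw [dX_eq_deriv (by fun_prop)]
  simp

lemma dY_time_mul_y (hσ : Differentiable ℝ σ) (p : ℝ × ℝ × ℝ) :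
    dY (fun q => σ q.1 * q.2.2) p = σ p.1 := by
  rw [dY_eq_deriv (by fun_prop)]
  simp

lemma dX_rigidRotation (hσ : Differentiable ℝ σ) :
    dX (rigidRotation σ) = fun p => σ p.1 * p.2.1 := by
  funext p
  unfold rigidRotation
  rw [dX_eq_deriv (by fun_prop)]
  simp only [deriv_const_mul_field, deriv_add_const, deriv_pow_field]
  ring

lemma dY_rigidRotation (hσ : Differentiable ℝ σ) :
    dY (rigidRotation σ) = fun p => σ p.1 * p.2.2 := by
  funext p
  unfold rigidRotation
  rw [dY_eq_deriv (by fun_prop)]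
  simp only [deriv_const_mul_field, deriv_const_add, deriv_pow_field]
  ring

lemma vort_rigidRotation (hσ : Differentiable ℝ σ) :
    vort (rigidRotation σ) = fun p => 2 * σ p.1 := by
  funext p
  rw [vort, dX_rigidRotation hσ, dY_rigidRotation hσ, dX_time_mul_x hσ, dY_time_mul_y hσ, two_mul]

lemma dX_vort_rigidRotation (hσ : Differentiable ℝ σ) (p : ℝ × ℝ × ℝ) :
    dX (vort (rigidRotation σ)) p = 0 := by
  rw [vort_rigidRotation hσ, dX_eq_deriv (by fun_prop)]
  simp

lemma dY_vort_rigidRotation (hσ : Differentiable ℝ σ) (p : ℝ × ℝ × ℝ) :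
    dY (vort (rigidRotation σ)) p = 0 := by
  rw [vort_rigidRotation hσ, dY_eq_deriv (by fun_prop)]
  simp

lemma div_deriv_mul_eq_dT_vort_rigidRotation (hσ : ContDiff ℝ 2 σ) (p : ℝ × ℝ × ℝ) :
    dX (fun q => deriv σ q.1 * q.2.1) p + dY (fun q => deriv σ q.1 * q.2.2) p
      = dT (vort (rigidRotation σ)) p := by
  have dσ : Differentiable ℝ σ := hσ.differentiable two_ne_zero
  have dσ' : Differentiable ℝ (deriv σ) := hσ.differentiable_deriv_two
  rw [dX_time_mul_x dσ', dY_time_mul_y dσ', vort_rigidRotation dσ, dT_eq_deriv (by fun_prop),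
    deriv_const_mul _ (dσ p.1), two_mul]

end RigidRotation

theorem equivalence_transformation_R_sigma
    (f1 f2 : V5 → ℝ) (hf1 : ContDiff ℝ (⊤ : ℕ∞) f1) (hf2 : ContDiff ℝ (⊤ : ℕ∞) f2)
    (σ : ℝ → ℝ) (hσ : ContDiff ℝ (⊤ : ℕ∞) σ)
    (ψ : ℝ × ℝ × ℝ → ℝ) (h : IsGenVortSol f1 f2 ψ) :
    IsGenVortSol
      (fun q => f1 q + σ q.1 / 2 * (q.2.1 ^ 2 + q.2.2.1 ^ 2) * q.2.2.2.2 + deriv σ q.1 * q.2.1)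
      (fun q => f2 q - σ q.1 / 2 * (q.2.1 ^ 2 + q.2.2.1 ^ 2) * q.2.2.2.1 + deriv σ q.1 * q.2.2.1)
      (fun p => ψ p + σ p.1 / 2 * (p.2.1 ^ 2 + p.2.2 ^ 2)) := by
  have hσ2 : ContDiff ℝ 2 σ := hσ.of_le ENat.LEInfty.out
  have dσ : Differentiable ℝ σ := hσ2.differentiable two_ne_zero
  have dσ' : Differentiable ℝ (deriv σ) := hσ2.differentiable_deriv_two
  exact equivalence_transformation_R_sigma_general (hf1.differentiable (by simp))
    (hf2.differentiable (by simp)) (contDiff_rigidRotation hσ) (dX_vort_rigidRotation dσ)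
    (dY_vort_rigidRotation dσ)
    ((dσ'.comp differentiable_fst).mul (by fun_prop))
    ((dσ'.comp differentiable_fst).mul (by fun_prop))
    (div_deriv_mul_eq_dT_vort_rigidRotation hσ2) h
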